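/- Assume (k₁, η) is not congruent modulo 2π (in the second component) to (1, π) or (−1, 0). Set i₁ = ∫₀^{2π} sin t · φ(k₁ sin t) dt, and let θ₁ = π/2 and θ₂ = 3π/2 if k₁ = 0 or η ≡ 0 or π (mod 2π), and otherwise θ₁ = π − θ*, θ₂ = 2π − θ* with θ* = arctan((π + i₁ cos η)/(i₁ sin η)). Then there exist ε₁ > 0 and δ > 0 such that for every ε ∈ (0, ε₁] there are 2π-periodic solutions φ_ε¹ and φ_ε² of (S'_ε) with φ_ε^i(0) → (sin θ_i, cos θ_i) as ε → 0⁺, and for each i ∈ {1,2}, φ_ε^i is the only 2π-periodic solution of (S'_ε) with initial value in the ball B_δ((sin θ_i, cos θ_i)). -/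

import Mathlib

open scoped Topology

/-- The saturation function: `φ(x) = -1` for `x < -1`, `φ(x) = x` for `-1 ≤ x ≤ 1`,
`φ(x) = 1` for `x > 1`. -/
noncomputable def sat (x : ℝ) : ℝ := if x < -1 then -1 else if x ≤ 1 then x else 1

/-- The right-hand side of the planar system (S'_ε). -/
noncomputable def sysF2 (k₁ η ε t : ℝ) (x : Fin 2 → ℝ) : Fin 2 → ℝ :=
  ![x 1 - x 0 * (x 0 ^ 2 + x 1 ^ 2 - 1),
    -x 0 - x 1 * (x 0 ^ 2 + x 1 ^ 2 - 1)
      + ε * (Real.sin t + sat (k₁ * Real.sin (t + η)))]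

/-!
In the frame rotating with the limit cycle, a `2π`-periodic solution near the cycle is a small
periodic solution `ζ` of the equation for the logarithm of the position. This is a zero of a map on
the Banach space of periodic functions; dividing its average phase component by `ε` gives a `C¹` map
which, at a simple zero of the Melnikov function, has an invertible derivative at `ε = 0`. The
implicit function theorem then yields existence, and uniqueness among periodic solutions that stay
near the cycle. A maximum principle and Gronwall's inequality show that a periodic solution which
merely starts near the cycle point does stay near it, so uniqueness holds in terms of initial values
in a ball that does not depend on `ε`.

With `A = π + i₁ cos η` and `B = i₁ sin η`, the Melnikov function is `θ ↦ A cos θ + B sin θ`. It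
vanishes at `θ₁` and `θ₂ = θ₁ + π`, and its zeros are simple unless `A = B = 0`. Since `i₁` is
strictly increasing in `k₁` and equals `k₁ π` for `|k₁| ≤ 1`, this degenerate case forces
`(k₁, η) ≡ (1, π)` or `(-1, 0)`.
-/

open Real Set Filter

theorem isInvertible_id_add_smulRight {𝕜 V : Type*} [NontriviallyNormedField 𝕜]
    [AddCommGroup V] [Module 𝕜 V] [TopologicalSpace V] [IsTopologicalAddGroup V]
    [ContinuousSMul 𝕜 V] {φ : V →L[𝕜] 𝕜} {e : V} (h : 1 + φ e ≠ 0) :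
    (ContinuousLinearMap.id 𝕜 V + φ.smulRight e).IsInvertible := by
  -- The Sherman–Morrison formula.
  refine .of_inverse (g := .id 𝕜 V - ((1 + φ e)⁻¹ • φ).smulRight e) ?_ ?_ <;> ext v <;>
    simp only [ContinuousLinearMap.comp_apply, add_apply, sub_apply, smul_apply,
      ContinuousLinearMap.id_apply, ContinuousLinearMap.smulRight_apply, map_add, map_sub,
      map_smul, smul_eq_mul] <;>
    match_scalars <;> field_simp <;> ring

section PeriodicKernels

variable {T : ℝ} {E : Type*} [NormedAddCommGroup E] [NormedSpace ℝ E]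

theorem apply_eq_of_hasDerivAt_zero {f : ℝ → E} (hf : ∀ t, HasDerivAt f 0 t) (s t : ℝ) :
    f s = f t :=
  is_const_of_deriv_eq_zero (fun t => (hf t).differentiableAt) (fun t => (hf t).deriv) s t

theorem hasDerivAt_integral_coe [CompleteSpace E] (f : C(AddCircle T, E)) (t : ℝ) :
    HasDerivAt (fun t => ∫ u in (0 : ℝ)..t, f (u : AddCircle T)) (f (t : AddCircle T)) t :=
  (Continuous.integral_hasStrictDerivAt (by fun_prop) 0 t).hasDerivAt

variable [hT : Fact (0 < T)]

/-- The convolution-type operator `f ↦ (x ↦ ∫₀ᵀ k(τ) f(x + τ) dτ)` on `T`-periodic continuous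
functions, from which the solution operators of periodic linear equations are built. -/
noncomputable def kernelOp (k : C(ℝ, ℝ)) : C(AddCircle T, E) →L[ℝ] C(AddCircle T, E) :=
  LinearMap.mkContinuous
    { toFun f :=
        { toFun x := ∫ τ in (0 : ℝ)..T, k τ • f (x + τ)
          continuous_toFun := by
            apply intervalIntegral.continuous_parametric_intervalIntegral_of_continuous'
            simp only [Function.uncurry_def]
            fun_prop }
      map_add' f g := by
        ext x
        simp only [ContinuousMap.coe_mk, ContinuousMap.add_apply, smul_add]
        apply intervalIntegral.integral_add <;>
          exact Continuous.intervalIntegrable (by fun_prop) _ _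
      map_smul' c f := by
        ext x
        simp only [ContinuousMap.coe_mk, ContinuousMap.smul_apply, RingHom.id_apply,
          ← intervalIntegral.integral_smul, smul_comm c] }
    (∫ τ in (0 : ℝ)..T, |k τ|) fun f => by
      have hk : 0 ≤ ∫ τ in (0 : ℝ)..T, |k τ| :=
        intervalIntegral.integral_nonneg hT.out.le fun _ _ => abs_nonneg _
      refine (ContinuousMap.norm_le _ (by positivity)).2 fun x => ?_
      rw [← intervalIntegral.integral_mul_const]
      refine intervalIntegral.norm_integral_le_of_norm_le hT.out.le (.of_forall fun τ _ => ?_)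
        (Continuous.intervalIntegrable (by fun_prop) _ _)
      rw [norm_smul]
      exact mul_le_mul_of_nonneg_left (f.norm_coe_le_norm _) (norm_nonneg _)

theorem kernelOp_apply (k : C(ℝ, ℝ)) (f : C(AddCircle T, E)) (x : AddCircle T) :
    kernelOp k f x = ∫ τ in (0 : ℝ)..T, k τ • f (x + τ) := rfl

theorem kernelOp_smul (c : ℝ) (k : C(ℝ, ℝ)) (f : C(AddCircle T, E)) :
    kernelOp (c • k) f = c • kernelOp k f := by
  ext x
  simp only [kernelOp_apply, ContinuousMap.smul_apply, smul_assoc, intervalIntegral.integral_smul]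

/-- The mean value of a `T`-periodic function. -/
noncomputable def circleMean : C(AddCircle T, E) →L[ℝ] E :=
  (ContinuousMap.evalCLM ℝ (0 : AddCircle T)).comp (kernelOp (.const ℝ T⁻¹))

theorem circleMean_apply (f : C(AddCircle T, E)) :
    circleMean f = T⁻¹ • ∫ t in (0 : ℝ)..T, f (t : AddCircle T) := by
  simp [circleMean, kernelOp_apply]

theorem kernelOp_const_inv (f : C(AddCircle T, E)) :
    kernelOp (.const ℝ T⁻¹) f = .const _ (circleMean f) := by
  ext x
  induction x using QuotientAddGroup.induction_on with | H t => ?_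
  have hp : Function.Periodic (fun u : ℝ => f (u : AddCircle T)) T := fun u => by simp
  have hshift := intervalIntegral.integral_comp_add_left (a := 0) (b := T)
    (fun u : ℝ => f (u : AddCircle T)) t
  rw [add_zero, hp.intervalIntegral_add_eq t 0, zero_add] at hshift
  simpa [circleMean_apply, kernelOp_apply] using congrArg (T⁻¹ • ·) hshift

/-- The operator sending `f` to the `T`-periodic solution of `y' = -a y + f`, for `a ≠ 0`. -/
noncomputable def decayOp (a : ℝ) : C(AddCircle T, E) →L[ℝ] C(AddCircle T, E) :=
  kernelOp ((exp (a * T) - 1)⁻¹ • ⟨fun τ => exp (a * τ), by fun_prop⟩)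

/-- The operator sending `f` to the periodic primitive of `f - circleMean f` vanishing at `0`. -/
noncomputable def primitiveOp : C(AddCircle T, E) →L[ℝ] C(AddCircle T, E) :=
  let J := kernelOp (T⁻¹ • .id ℝ)
  J - .const ℝ _ ∘L ContinuousMap.evalCLM ℝ 0 ∘L J

theorem primitiveOp_apply_zero (f : C(AddCircle T, E)) : primitiveOp f 0 = 0 := by
  simp [primitiveOp]

variable [CompleteSpace E]

-- Moves the dependence on `t` from `f`, which is only continuous, to its differentiable primitive.
theorem kernelOp_coe_eq_by_parts {k k' : C(ℝ, ℝ)} (hk : ∀ τ, HasDerivAt k (k' τ) τ)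
    (f : C(AddCircle T, E)) (t : ℝ) :
    kernelOp k f t = k T • (∫ u in (0 : ℝ)..t + T, f (u : AddCircle T))
      - k 0 • (∫ u in (0 : ℝ)..t, f (u : AddCircle T))
      - ∫ τ in (0 : ℝ)..T, k' τ • ∫ u in (0 : ℝ)..t + τ, f (u : AddCircle T) := by
  have h := intervalIntegral.integral_smul_deriv_eq_deriv_smul (a := 0) (b := T)
    (fun τ _ => hk τ) (fun τ _ => (hasDerivAt_integral_coe f (t + τ)).comp_const_add t τ)
    (k'.continuous.intervalIntegrable _ _) (Continuous.intervalIntegrable (by fun_prop) _ _)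
  simpa [kernelOp_apply] using h

theorem hasDerivAt_kernelOp {k k' : C(ℝ, ℝ)} (hk : ∀ τ, HasDerivAt k (k' τ) τ)
    (f : C(AddCircle T, E)) (t : ℝ) :
    HasDerivAt (fun t : ℝ => kernelOp k f t)
      ((k T - k 0) • f (t : AddCircle T) - kernelOp k' f t) t := by
  have hF := hasDerivAt_integral_coe f
  have : Continuous fun t => ∫ u in (0 : ℝ)..t, f (u : AddCircle T) :=
    continuous_iff_continuousAt.2 fun t => (hF t).continuousAt
  have hI := (intervalIntegral.hasDerivAt_integral_of_dominated_loc_of_deriv_le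
    (μ := MeasureTheory.volume) (F := fun t τ => k' τ • ∫ u in (0 : ℝ)..t + τ, f (u : AddCircle T))
    (F' := fun t τ => k' τ • f (t + τ : ℝ)) (a := 0) (b := T)
    (bound := fun τ => ‖k' τ‖ * ‖f‖) (univ_mem (f := 𝓝 t))
    (.of_forall fun t => Continuous.aestronglyMeasurable (by fun_prop))
    (Continuous.intervalIntegrable (by fun_prop) _ _)
    (Continuous.aestronglyMeasurable (by fun_prop))
    (.of_forall fun τ _ t _ => by
      rw [norm_smul]
      exact mul_le_mul_of_nonneg_left (f.norm_coe_le_norm _) (norm_nonneg _))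
    (Continuous.intervalIntegrable (by fun_prop) _ _)
    (.of_forall fun τ _ t _ => ((hF (t + τ)).comp_add_const t τ).const_smul (k' τ))).2
  simp only [kernelOp_coe_eq_by_parts hk]
  refine ((((hF (t + T)).comp_add_const t T).const_smul (k T)).sub
    ((hF t).const_smul (k 0)) |>.sub hI).congr_deriv ?_
  simp [kernelOp_apply, sub_smul]

theorem hasDerivAt_decayOp {a : ℝ} (ha : a ≠ 0) (f : C(AddCircle T, E)) (t : ℝ) :
    HasDerivAt (fun t : ℝ => decayOp a f t) (-a • decayOp a f t + f (t : AddCircle T)) t := by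
  set k : C(ℝ, ℝ) := (exp (a * T) - 1)⁻¹ • ⟨fun τ => exp (a * τ), by fun_prop⟩
  have hk : ∀ τ, HasDerivAt k ((a • k) τ) τ := fun τ => by
    refine ((((hasDerivAt_id τ).const_mul a).exp).const_smul (exp (a * T) - 1)⁻¹).congr_deriv ?_
    simp only [id_eq, mul_one, smul_eq_mul, ContinuousMap.coe_smul, ContinuousMap.coe_mk,
      Pi.smul_apply, k]
    ring
  have hT0 : exp (a * T) - 1 ≠ 0 :=
    sub_ne_zero.2 fun h => mul_ne_zero ha hT.out.ne' (exp_eq_one_iff _ |>.1 h)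
  have hjump : k T - k 0 = 1 := by simp [k, ← mul_sub_one, hT0]
  refine (hasDerivAt_kernelOp hk f t).congr_deriv ?_
  rw [hjump, kernelOp_smul, one_smul, ContinuousMap.smul_apply, neg_smul, neg_add_eq_sub]
  rfl

theorem hasDerivAt_primitiveOp (f : C(AddCircle T, E)) (t : ℝ) :
    HasDerivAt (fun t : ℝ => primitiveOp f t) (f (t : AddCircle T) - circleMean f) t := by
  have hk : ∀ τ, HasDerivAt (T⁻¹ • .id ℝ : C(ℝ, ℝ)) (ContinuousMap.const ℝ T⁻¹ τ) τ := fun τ => by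
    simpa using (hasDerivAt_id τ).const_smul T⁻¹
  refine ((hasDerivAt_kernelOp hk f t).sub_const _).congr_deriv ?_
  simp [kernelOp_const_inv, hT.out.ne']

theorem eq_decayOp_of_hasDerivAt {a : ℝ} (ha : a ≠ 0) {y f : C(AddCircle T, E)}
    (h : ∀ t : ℝ, HasDerivAt (fun t : ℝ => y t) (-a • y t + f (t : AddCircle T)) t) :
    y = decayOp a f := by
  have hd : ∀ t : ℝ, HasDerivAt (fun t : ℝ => exp (a * t) • (y t - decayOp a f t)) 0 t :=
    fun t => by
      have hexp := ((hasDerivAt_id t).const_mul a).exp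
      refine (hexp.smul ((h t).sub (hasDerivAt_decayOp ha f t))).congr_deriv ?_
      simp only [Pi.sub_apply]
      module
  ext x
  induction x using QuotientAddGroup.induction_on with | H t => ?_
  have hshift := apply_eq_of_hasDerivAt_zero hd (t + T) t
  rw [AddCircle.coe_add_period] at hshift
  by_contra hne
  have hexp : a * (t + T) = a * t := exp_injective
    (smul_left_injective ℝ (sub_ne_zero.2 hne) hshift)
  exact mul_ne_zero ha hT.out.ne' (by linarith)

theorem circleMean_eq_zero_of_hasDerivAt {b f : C(AddCircle T, E)}
    (h : ∀ t : ℝ, HasDerivAt (fun t : ℝ => b t) (f (t : AddCircle T)) t) : circleMean f = 0 := by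
  rw [circleMean_apply, intervalIntegral.integral_eq_sub_of_hasDerivAt (fun t _ => h t)
    (Continuous.intervalIntegrable (by fun_prop) _ _), AddCircle.coe_period, AddCircle.coe_zero,
    sub_self, smul_zero]

theorem eq_const_add_primitiveOp_of_hasDerivAt {b f : C(AddCircle T, E)}
    (h : ∀ t : ℝ, HasDerivAt (fun t : ℝ => b t) (f (t : AddCircle T)) t) :
    b = .const _ (b 0) + primitiveOp f := by
  have hd : ∀ t : ℝ, HasDerivAt (fun t : ℝ => b t - primitiveOp f t) 0 t := fun t => by
    refine ((h t).sub (hasDerivAt_primitiveOp f t)).congr_deriv ?_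
    rw [circleMean_eq_zero_of_hasDerivAt h, sub_zero, sub_self]
  ext x
  induction x using QuotientAddGroup.induction_on with | H t => ?_
  have h0 := apply_eq_of_hasDerivAt_zero hd t 0
  rw [AddCircle.coe_zero, primitiveOp_apply_zero, sub_zero] at h0
  exact eq_add_of_sub_eq h0

theorem hasDerivAt_iff_eq_decayOp {a : ℝ} (ha : a ≠ 0) {y f : C(AddCircle T, E)} :
    (∀ t : ℝ, HasDerivAt (fun t : ℝ => y t) (-a • y t + f (t : AddCircle T)) t) ↔
      y = decayOp a f :=
  ⟨eq_decayOp_of_hasDerivAt ha, fun h t => by rw [h]; exact hasDerivAt_decayOp ha f t⟩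

theorem hasDerivAt_iff_eq_primitiveOp {b f : C(AddCircle T, E)} :
    (∀ t : ℝ, HasDerivAt (fun t : ℝ => b t) (f (t : AddCircle T)) t) ↔
      circleMean f = 0 ∧ b = .const _ (b 0) + primitiveOp f := by
  refine ⟨fun h => ⟨circleMean_eq_zero_of_hasDerivAt h, eq_const_add_primitiveOp_of_hasDerivAt h⟩,
    fun ⟨hmean, hb⟩ t => ?_⟩
  rw [hb]
  simpa [hmean] using (hasDerivAt_primitiveOp f t).const_add (b 0)

end PeriodicKernels

section PeriodicBranches

theorem eventually_forall_Ioc_ball {X : Type*} [PseudoMetricSpace X] {p : X} {P : ℝ × X → Prop}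
    (h : ∀ᶠ y in 𝓝[>] 0 ×ˢ 𝓝 p, P y) :
    ∀ᶠ r in 𝓝[>] (0 : ℝ), ∀ ε ∈ Ioc 0 r, ∀ x ∈ Metric.ball p r, P (ε, x) := by
  obtain ⟨P₁, h₁, P₂, h₂, hP⟩ := eventually_prod_iff.1 h
  obtain ⟨r₁, hr₁, hball₁⟩ := mem_nhdsGT_iff_exists_Ioc_subset.1 h₁
  obtain ⟨r₂, hr₂, hball₂⟩ := Metric.eventually_nhds_iff_ball.1 h₂
  filter_upwards [Ioc_mem_nhdsGT (lt_min hr₁ hr₂)] with r hr ε hε x hx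
  have hr' := le_min_iff.1 hr.2
  exact hP (hball₁ ⟨hε.1, hε.2.trans hr'.1⟩) (hball₂ x (Metric.ball_subset_ball hr'.2 hx))

variable {E E' : Type*} [NormedAddCommGroup E] [NormedSpace ℝ E] [NormedAddCommGroup E']
  [NormedSpace ℝ E'] {F : ℝ → ℝ → E → E} {G : ℝ → ℝ → E' → E'} {T : ℝ} {p : E}

/-- The family of equations `x' = F ε t x` has, for small `ε > 0`, a `T`-periodic solution
emanating from `p`, and it is the only one whose initial value is close to `p`. The product filter
expresses that the neighbourhood of `p` does not depend on `ε`. -/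
def HasPeriodicBranch (F : ℝ → ℝ → E → E) (T : ℝ) (p : E) : Prop :=
  ∃ Φ : ℝ → ℝ → E, Tendsto (Φ · 0) (𝓝[>] 0) (𝓝 p) ∧
    (∀ᶠ ε in 𝓝[>] 0, IsIntegralCurve (Φ ε) (F ε) ∧ Function.Periodic (Φ ε) T) ∧
    ∀ᶠ y in 𝓝[>] 0 ×ˢ 𝓝 p, ∀ ψ, IsIntegralCurve ψ (F y.1) → Function.Periodic ψ T →
      ψ 0 = y.2 → ψ = Φ y.1

theorem HasPeriodicBranch.congr_homeomorph (hF : HasPeriodicBranch F T p) (L : ℝ → E ≃ₜ E')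
    (hL : Function.Periodic L T)
    (hFG : ∀ ε ψ, IsIntegralCurve ψ (G ε) ↔ IsIntegralCurve (fun t => (L t).symm (ψ t)) (F ε)) :
    HasPeriodicBranch G T (L 0 p) := by
  obtain ⟨Φ, hlim, hsol, huniq⟩ := hF
  refine ⟨fun ε t => L t (Φ ε t), ((L 0).continuous.tendsto p).comp hlim, ?_, ?_⟩
  · filter_upwards [hsol] with ε ⟨hint, hper⟩
    exact ⟨(hFG ε _).2 (by simpa using hint), fun t => by simp only [hL t, hper t]⟩
  · have hback : Tendsto (fun y : ℝ × E' => (y.1, (L 0).symm y.2)) (𝓝[>] 0 ×ˢ 𝓝 (L 0 p))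
        (𝓝[>] 0 ×ˢ 𝓝 p) :=
      tendsto_id.prodMap (by simpa using (L 0).symm.continuous.tendsto (L 0 p))
    filter_upwards [hback.eventually huniq] with y hy ψ hint hper h0
    have h := hy _ ((hFG y.1 ψ).1 hint) (fun t => by simp only [hL t, hper t]) (by rw [h0])
    ext t
    simp [← h]

theorem exists_unique_periodic_of_hasPeriodicBranch {ι : Type*} [Finite ι] {q : ι → E}
    (h : ∀ i, HasPeriodicBranch F T (q i)) :
    ∃ ε₁ > 0, ∃ δ > 0, ∃ Φ : ℝ → ι → ℝ → E, ∀ ε ∈ Ioc (0 : ℝ) ε₁, ∀ i,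
      IsIntegralCurve (Φ ε i) (F ε) ∧ Function.Periodic (Φ ε i) T ∧
      Tendsto (fun ε => Φ ε i 0) (𝓝[>] 0) (𝓝 (q i)) ∧
      ∀ ψ, IsIntegralCurve ψ (F ε) → Function.Periodic ψ T → ψ 0 ∈ Metric.ball (q i) δ →
        ψ = Φ ε i := by
  choose Φ hlim hsol huniq using h
  have hboth (i : ι) := eventually_forall_Ioc_ball
    ((tendsto_fst.eventually (hsol i)).and (huniq i))
  obtain ⟨r, hr, hr0⟩ := ((eventually_all.2 hboth).and self_mem_nhdsWithin).exists
  refine ⟨r, hr0, r, hr0, fun ε i => Φ i ε, fun ε hε i => ?_⟩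
  obtain ⟨hint, hper⟩ := (hr i ε hε (q i) (Metric.mem_ball_self hr0)).1
  exact ⟨hint, hper, hlim i, fun ψ hψ hψT hψ0 => (hr i ε hε (ψ 0) hψ0).2 ψ hψ hψT rfl⟩

end PeriodicBranches

section RotatingFrame

variable {T : ℝ} [hT : Fact (0 < T)]

/-- The vector field `w' = w (1 - |w|²) + ε g` with `T`-periodic complex forcing `g`: a weakly
forced limit cycle seen from the frame rotating with it. -/
noncomputable def rotField (g : C(AddCircle T, ℂ)) (ε t : ℝ) (w : ℂ) : ℂ :=
  w * (1 - (‖w‖ ^ 2 : ℝ)) + ε * g t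

theorem norm_forcing_le (g : C(AddCircle T, ℂ)) (ε : ℝ) (x : AddCircle T) :
    ‖ε * g x‖ ≤ |ε| * ‖g‖ := by
  rw [norm_mul, Complex.norm_real, norm_eq_abs]
  exact mul_le_mul_of_nonneg_left (g.norm_coe_le_norm x) (abs_nonneg ε)

theorem inner_rotField_le (g : C(AddCircle T, ℂ)) (ε t : ℝ) (w : ℂ) :
    inner ℝ w (rotField g ε t w) ≤ ‖w‖ ^ 2 * (1 - ‖w‖ ^ 2) + ‖w‖ * (|ε| * ‖g‖) := by
  have hradial : inner ℝ w (w * (1 - (‖w‖ ^ 2 : ℝ))) = ‖w‖ ^ 2 * (1 - ‖w‖ ^ 2) := by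
    have hsmul : w * (1 - (‖w‖ ^ 2 : ℝ)) = (1 - ‖w‖ ^ 2) • w := by
      rw [Complex.real_smul, Complex.ofReal_sub, Complex.ofReal_one, mul_comm]
    rw [hsmul, inner_smul_right, real_inner_self_eq_norm_sq, mul_comm]
  rw [rotField, inner_add_right, hradial]
  gcongr
  exact (real_inner_le_norm _ _).trans
    (mul_le_mul_of_nonneg_left (norm_forcing_le g ε t) (norm_nonneg w))

theorem norm_rotField_le (g : C(AddCircle T, ℂ)) (ε t : ℝ) {w : ℂ} (hw : ‖w‖ ≤ 2) :
    ‖rotField g ε t w‖ ≤ 6 * ‖w - 1‖ + |ε| * ‖g‖ := by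
  refine (norm_add_le _ _).trans (add_le_add ?_ (norm_forcing_le g ε t))
  have hdist : |1 - ‖w‖| ≤ ‖w - 1‖ := by
    simpa [abs_sub_comm] using abs_norm_sub_norm_le w 1
  calc ‖w * (1 - (‖w‖ ^ 2 : ℝ))‖ = ‖w‖ * (1 + ‖w‖) * |1 - ‖w‖| := by
        rw [norm_mul, ← Complex.ofReal_one, ← Complex.ofReal_sub, Complex.norm_real, norm_eq_abs,
          ← one_pow 2, sq_sub_sq, one_pow, abs_mul, abs_of_nonneg (by positivity), mul_assoc]
    _ ≤ 2 * (1 + 2) * ‖w - 1‖ := by gcongr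
    _ = 6 * ‖w - 1‖ := by norm_num

theorem norm_le_two_of_isIntegralCurve_rotField {g : C(AddCircle T, ℂ)} {ε : ℝ} {w : ℝ → ℂ}
    (hw : IsIntegralCurve w (rotField g ε)) (hp : Function.Periodic w T) (hg : |ε| * ‖g‖ ≤ 1)
    (t : ℝ) : ‖w t‖ ≤ 2 := by
  have hcont := hw.continuous
  obtain ⟨_, ⟨t₀, rfl⟩, hmax⟩ := (hp.comp fun z => ‖z‖ ^ 2).compact_of_continuous
    hT.out.ne' (by fun_prop) |>.exists_isMaxOn (range_nonempty _) continuousOn_id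
  replace hmax s : ‖w s‖ ^ 2 ≤ ‖w t₀‖ ^ 2 := hmax (mem_range_self s)
  have hcrit := IsLocalMax.hasDerivAt_eq_zero (.of_forall hmax) (hw t₀).norm_sq
  have hle := inner_rotField_le g ε t₀ (w t₀)
  have hn := norm_nonneg (w t₀)
  have hbound : ‖w t₀‖ ^ 2 ≤ 2 ^ 2 := by
    by_contra! h
    nlinarith [lt_of_pow_lt_pow_left₀ 2 hn h, mul_le_mul_of_nonneg_left hg hn]
  exact (pow_le_pow_iff_left₀ (norm_nonneg _) zero_le_two two_ne_zero).1 ((hmax t).trans hbound)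

theorem norm_sub_one_le_gronwallBound {g : C(AddCircle T, ℂ)} {ε : ℝ} {w : ℝ → ℂ}
    (hw : IsIntegralCurve w (rotField g ε)) (hp : Function.Periodic w T) (hg : |ε| * ‖g‖ ≤ 1)
    (t : ℝ) : ‖w t - 1‖ ≤ gronwallBound ‖w 0 - 1‖ 6 (|ε| * ‖g‖) T := by
  obtain ⟨u, hu, hut⟩ := hp.exists_mem_Ico₀ hT.out t
  have hcont := hw.continuous
  rw [hut]
  calc ‖w u - 1‖ ≤ gronwallBound ‖w 0 - 1‖ 6 (|ε| * ‖g‖) (u - 0) :=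
        norm_le_gronwallBound_of_norm_deriv_right_le (f := fun t => w t - 1) (by fun_prop)
          (fun s _ => ((hw s).sub_const 1).hasDerivWithinAt) le_rfl
          (fun s _ => norm_rotField_le g ε s (norm_le_two_of_isIntegralCurve_rotField hw hp hg s))
          u (Ico_subset_Icc_self hu)
    _ ≤ gronwallBound ‖w 0 - 1‖ 6 (|ε| * ‖g‖) T :=
        gronwallBound_mono (norm_nonneg _) (by positivity) (by norm_num) (by linarith [hu.2])

theorem eventually_forall_periodic_mem_nhds_one (g : C(AddCircle T, ℂ)) {U : Set ℂ} (hU : U ∈ 𝓝 1) :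
    ∀ᶠ y : ℝ × ℂ in 𝓝 (0, 1), ∀ w, IsIntegralCurve w (rotField g y.1) → Function.Periodic w T →
      w 0 = y.2 → ∀ t, w t ∈ U := by
  obtain ⟨ρ, hρ, hball⟩ := Metric.mem_nhds_iff.1 hU
  have hsmall : ∀ᶠ y : ℝ × ℂ in 𝓝 (0, 1), |y.1| * ‖g‖ < 1 :=
    ContinuousAt.eventually_lt (by fun_prop) (by fun_prop) (by simp)
  have hgronwall : ∀ᶠ y : ℝ × ℂ in 𝓝 (0, 1), gronwallBound ‖y.2 - 1‖ 6 (|y.1| * ‖g‖) T < ρ := by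
    simp only [gronwallBound_of_K_ne_0 (K := 6) (by norm_num)]
    exact ContinuousAt.eventually_lt (by fun_prop) (by fun_prop) (by simpa using hρ)
  filter_upwards [hsmall, hgronwall] with y hy hyρ w hw hp h0 t
  rw [← h0] at hyρ
  exact hball (mem_ball_iff_norm.2 ((norm_sub_one_le_gronwallBound hw hp hy.le t).trans_lt hyρ))

end RotatingFrame

section LogCoordinate

/-- The vector field `ζ' = 1 - exp (2 Re ζ) + ε g exp (-ζ)`, which is `rotField` in the coordinate
`ζ = log w`. -/
noncomputable def logField {T : ℝ} (g : C(AddCircle T, ℂ)) (ε t : ℝ) (ζ : ℂ) : ℂ :=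
  1 - (exp (2 * ζ.re) : ℝ) + ε * (g t * Complex.exp (-ζ))

theorem isIntegralCurve_cexp {T : ℝ} {g : C(AddCircle T, ℂ)} {ε : ℝ} {ζ : ℝ → ℂ}
    (hζ : IsIntegralCurve ζ (logField g ε)) :
    IsIntegralCurve (fun t => Complex.exp (ζ t)) (rotField g ε) := fun t => by
  refine (hζ t).cexp.congr_deriv ?_
  have hnorm : ‖Complex.exp (ζ t)‖ ^ 2 = exp (2 * (ζ t).re) := by
    rw [Complex.norm_exp, ← exp_nat_mul, Nat.cast_ofNat]
  have hinv : Complex.exp (ζ t) * Complex.exp (-ζ t) = 1 := by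
    rw [← Complex.exp_add, add_neg_cancel, Complex.exp_zero]
  rw [logField, rotField, hnorm]
  linear_combination (ε * g t : ℂ) * hinv

theorem isIntegralCurve_clog {T : ℝ} {g : C(AddCircle T, ℂ)} {ε : ℝ} {w : ℝ → ℂ}
    (hw : IsIntegralCurve w (rotField g ε)) (hslit : ∀ t, w t ∈ Complex.slitPlane) :
    IsIntegralCurve (fun t => Complex.log (w t)) (logField g ε) := fun t => by
  refine ((hw t).clog_real (hslit t)).congr_deriv ?_
  have hne : w t ≠ 0 := Complex.slitPlane_ne_zero (hslit t)
  have hnorm : exp (2 * (Complex.log (w t)).re) = ‖w t‖ ^ 2 := by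
    rw [Complex.log_re, ← Nat.cast_ofNat, exp_nat_mul, exp_log (norm_pos_iff.2 hne)]
  rw [logField, rotField, hnorm, Complex.exp_neg, Complex.exp_log hne]
  field_simp

end LogCoordinate

theorem hasDerivAt_iff_re_im {z : ℝ → ℂ} {z' : ℂ} {t : ℝ} :
    HasDerivAt z z' t ↔
      HasDerivAt (fun t => (z t).re) z'.re t ∧ HasDerivAt (fun t => (z t).im) z'.im t := by
  refine ⟨fun h => ⟨Complex.reCLM.hasFDerivAt.comp_hasDerivAt t h,
    Complex.imCLM.hasFDerivAt.comp_hasDerivAt t h⟩, fun ⟨hre, him⟩ => ?_⟩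
  simpa [Pi.add_def] using hre.ofReal_comp.add (him.ofReal_comp.mul_const Complex.I)

section PointwiseOperators

variable {X : Type*} [TopologicalSpace X]

/-- Pointwise real part of a complex function. -/
noncomputable def reOp : C(X, ℂ) →L[ℝ] C(X, ℝ) := Complex.reCLM.compLeftContinuous ℝ X

/-- Pointwise imaginary part of a complex function. -/
noncomputable def imOp : C(X, ℂ) →L[ℝ] C(X, ℝ) := Complex.imCLM.compLeftContinuous ℝ X

/-- The pair `(s, b)` of real functions as the complex function `s + i b`. -/
noncomputable def toComplexOp : C(X, ℝ) × C(X, ℝ) →L[ℝ] C(X, ℂ) :=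
  (Complex.ofRealCLM.compLeftContinuous ℝ X).coprod
    ((Complex.I • Complex.ofRealCLM).compLeftContinuous ℝ X)

@[simp] theorem reOp_apply (f : C(X, ℂ)) (x : X) : reOp f x = (f x).re := rfl

@[simp] theorem imOp_apply (f : C(X, ℂ)) (x : X) : imOp f x = (f x).im := rfl

@[simp] theorem toComplexOp_apply (v : C(X, ℝ) × C(X, ℝ)) (x : X) :
    toComplexOp v x = ⟨v.1 x, v.2 x⟩ := by
  simp [toComplexOp, Complex.ext_iff]

theorem toComplexOp_reOp_imOp (f : C(X, ℂ)) : toComplexOp (reOp f, imOp f) = f := by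
  ext x
  simp

variable [CompactSpace X]

theorem continuousMap_exp_apply {𝕜 : Type*} [RCLike 𝕜] (f : C(X, 𝕜)) (x : X) :
    NormedSpace.exp f x = NormedSpace.exp (f x) :=
  NormedSpace.map_exp (ContinuousMap.evalAlgHom 𝕜 𝕜 x) (continuous_eval_const x) f

theorem norm_reOp_imOp_lt {f : C(X, ℂ)} {r : ℝ} (hr : 0 < r) (h : ‖f‖ < r) :
    ‖(reOp f, imOp f)‖ < r := by
  have hf x : ‖f x‖ < r := (f.norm_coe_le_norm x).trans_lt h
  rw [Prod.norm_def, max_lt_iff, ContinuousMap.norm_lt_iff _ hr, ContinuousMap.norm_lt_iff _ hr]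
  exact ⟨fun x => (Complex.abs_re_le_norm _).trans_lt (hf x),
    fun x => (Complex.abs_im_le_norm _).trans_lt (hf x)⟩

end PointwiseOperators

@[fun_prop]
theorem contDiff_normedSpace_exp {A : Type*} [NormedCommRing A] [NormedAlgebra ℝ A]
    [CompleteSpace A] {n : WithTop ℕ∞} : ContDiff ℝ n (NormedSpace.exp : A → A) :=
  contDiff_iff_contDiffAt.2 fun x => (NormedSpace.exp_analytic (𝕂 := ℝ) x).contDiffAt

theorem hasFDerivAt_exp_clm_zero {V A : Type*} [NormedAddCommGroup V] [NormedSpace ℝ V]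
    [NormedCommRing A] [NormedAlgebra ℝ A] [CompleteSpace A] (L : V →L[ℝ] A) :
    HasFDerivAt (fun v => NormedSpace.exp (L v)) L 0 := by
  have h : HasFDerivAt (NormedSpace.exp : A → A) (1 : A →L[ℝ] A) (L 0) := by
    simpa using hasFDerivAt_exp_zero (𝕂 := ℝ) (𝔸 := A)
  exact h.comp 0 L.hasFDerivAt

theorem sub_eval_sub_eq_zero_iff {X : Type*} [TopologicalSpace X] {x₀ : X} {b p : C(X, ℝ)}
    (hp : p x₀ = 0) {m : ℝ} :
    b - b x₀ • 1 - p - m • 1 = 0 ↔ m = 0 ∧ b = .const _ (b x₀) + p := by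
  simp only [ContinuousMap.ext_iff, ContinuousMap.sub_apply, ContinuousMap.smul_apply,
    ContinuousMap.one_apply, ContinuousMap.zero_apply, ContinuousMap.add_apply,
    ContinuousMap.const_apply, smul_eq_mul, mul_one]
  constructor
  · intro h
    have hm : m = 0 := by simpa [hp] using h x₀
    exact ⟨hm, fun x => by linarith [h x]⟩
  · rintro ⟨rfl, h⟩ x
    linarith [h x]

section BlownUpMap

variable {T : ℝ} [hT : Fact (0 < T)]

/-- The forcing term `g exp (-ζ)` of `logField`, for `ζ = s + i b`. -/
noncomputable def logForcing (g : C(AddCircle T, ℂ)) (v : C(AddCircle T, ℝ) × C(AddCircle T, ℝ)) :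
    C(AddCircle T, ℂ) :=
  g * NormedSpace.exp (-toComplexOp v)

/-- The map on pairs `(ε, (s, b))` whose zeros with `ε ≠ 0` are the `T`-periodic solutions
`ζ = s + i b` of `logField`. The mean of the equation for `b` has been divided by `ε`, which makes
the problem regular at `ε = 0`. -/
noncomputable def blownUpMap (g : C(AddCircle T, ℂ))
    (v : ℝ × (C(AddCircle T, ℝ) × C(AddCircle T, ℝ))) : C(AddCircle T, ℝ) × C(AddCircle T, ℝ) :=
  (v.2.1 - decayOp 2 (1 - NormedSpace.exp ((2 : ℝ) • v.2.1) + (2 : ℝ) • v.2.1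
      + v.1 • reOp (logForcing g v.2)),
    v.2.2 - ContinuousMap.evalCLM ℝ (0 : AddCircle T) v.2.2 • 1
      - v.1 • primitiveOp (imOp (logForcing g v.2)) - circleMean (imOp (logForcing g v.2)) • 1)

@[fun_prop]
theorem contDiff_logForcing (g : C(AddCircle T, ℂ)) : ContDiff ℝ 1 (logForcing g) := by
  unfold logForcing
  fun_prop

theorem contDiff_blownUpMap (g : C(AddCircle T, ℂ)) : ContDiff ℝ 1 (blownUpMap g) := by
  unfold blownUpMap
  fun_prop

theorem blownUpMap_zero {g : C(AddCircle T, ℂ)} (hg : circleMean (imOp g) = 0) :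
    blownUpMap g (0, 0) = 0 := by
  simp [blownUpMap, logForcing, hg]

theorem hasFDerivAt_logForcing_zero (g : C(AddCircle T, ℂ)) :
    HasFDerivAt (logForcing g) (ContinuousLinearMap.mul ℝ _ g ∘L (-toComplexOp)) 0 := by
  have hexp : HasFDerivAt (fun v => NormedSpace.exp (-toComplexOp v))
      (-(toComplexOp (X := AddCircle T))) 0 := by
    simpa using hasFDerivAt_exp_clm_zero (-(toComplexOp (X := AddCircle T)))
  exact (ContinuousLinearMap.mul ℝ _ g).hasFDerivAt.comp 0 hexp

/-- The functional `(s, b) ↦ mean Im (g (s + i b))`, the derivative of the resonance condition. -/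
noncomputable def meanImMul (g : C(AddCircle T, ℂ)) :
    C(AddCircle T, ℝ) × C(AddCircle T, ℝ) →L[ℝ] ℝ :=
  circleMean ∘L imOp ∘L ContinuousLinearMap.mul ℝ _ g ∘L toComplexOp

theorem meanImMul_zero_one (g : C(AddCircle T, ℂ)) : meanImMul g (0, 1) = circleMean (reOp g) := by
  refine congrArg circleMean (ContinuousMap.ext fun x => ?_)
  simp

theorem hasFDerivAt_blownUpMap_zero (g : C(AddCircle T, ℂ)) :
    HasFDerivAt (fun v => blownUpMap g (0, v))
      (.id ℝ _ + (meanImMul g - ContinuousMap.evalCLM ℝ 0 ∘L .snd ℝ _ _).smulRight (0, 1)) 0 := by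
  have hfst := (ContinuousLinearMap.fst ℝ C(AddCircle T, ℝ) C(AddCircle T, ℝ)).hasFDerivAt (x := 0)
  have hdecay := (decayOp (2 : ℝ)).hasFDerivAt.comp 0
    (((hasFDerivAt_exp_clm_zero ((2 : ℝ) • .fst ℝ C(AddCircle T, ℝ) C(AddCircle T, ℝ))).const_sub
      1).add (hfst.const_smul (2 : ℝ)))
  have hmean := ((circleMean ∘L imOp).hasFDerivAt.comp 0
    (hasFDerivAt_logForcing_zero g)).smul_const (1 : C(AddCircle T, ℝ))
  have heval := ((ContinuousMap.evalCLM ℝ (0 : AddCircle T)) ∘L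
    .snd ℝ C(AddCircle T, ℝ) C(AddCircle T, ℝ)).hasFDerivAt.smul_const (1 : C(AddCircle T, ℝ))
      (x := 0)
  refine (((hasFDerivAt_fst.sub hdecay).prodMk
    ((hasFDerivAt_snd.sub heval).sub hmean)).congr_fderiv ?_).congr_of_eventuallyEq
      (.of_forall fun v => ?_)
  · refine ContinuousLinearMap.ext fun v => Prod.ext ?_ ?_
    · simp
    · simp only [meanImMul, ContinuousLinearMap.prod_apply, ContinuousLinearMap.coe_fst',
        ContinuousLinearMap.coe_snd', ContinuousLinearMap.comp_apply,
        ContinuousLinearMap.smulRight_apply, ContinuousLinearMap.mul_apply',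
        ContinuousLinearMap.id_apply, ContinuousMap.evalCLM_apply, add_apply, sub_apply, neg_apply,
        map_neg, Prod.snd_add, Prod.smul_mk]
      module
  · simp [blownUpMap]

theorem isInvertible_fderiv_blownUpMap {g : C(AddCircle T, ℂ)} (hg : circleMean (reOp g) ≠ 0) :
    (fderiv ℝ (blownUpMap g) (0, 0) ∘L .inr ℝ ℝ _).IsInvertible := by
  have hpartial := (((contDiff_blownUpMap g).differentiable one_ne_zero).differentiableAt
    |>.hasFDerivAt.comp 0 (hasFDerivAt_prodMk_right (0 : ℝ) 0)).unique
      (hasFDerivAt_blownUpMap_zero g)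
  rw [hpartial]
  exact isInvertible_id_add_smulRight (by simpa [meanImMul_zero_one] using hg)

theorem exists_zeros_blownUpMap {g : C(AddCircle T, ℂ)} (him : circleMean (imOp g) = 0)
    (hre : circleMean (reOp g) ≠ 0) :
    ∃ γ : ℝ → C(AddCircle T, ℝ) × C(AddCircle T, ℝ), Tendsto γ (𝓝 0) (𝓝 0) ∧
      ∀ᶠ y in 𝓝 ((0 : ℝ), (0 : C(AddCircle T, ℝ) × C(AddCircle T, ℝ))),
        blownUpMap g y = 0 ↔ γ y.1 = y.2 := by
  have hstrict : HasStrictFDerivAt (blownUpMap g) (fderiv ℝ (blownUpMap g) (0, 0)) (0, 0) :=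
    (contDiff_blownUpMap g).contDiffAt.hasStrictFDerivAt one_ne_zero
  have hinv := isInvertible_fderiv_blownUpMap hre
  refine ⟨hstrict.implicitFunctionOfProdDomain hinv,
    hstrict.tendsto_implicitFunctionOfProdDomain hinv, ?_⟩
  simpa only [blownUpMap_zero him] using
    hstrict.eventually_apply_eq_iff_implicitFunctionOfProdDomain hinv

theorem isIntegralCurve_logField_iff {g : C(AddCircle T, ℂ)} {ε : ℝ}
    {s b : C(AddCircle T, ℝ)} :
    IsIntegralCurve (fun t : ℝ => toComplexOp (s, b) t) (logField g ε) ↔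
      (∀ t : ℝ, HasDerivAt (fun t : ℝ => s t)
        (1 - exp (2 * s t) + ε * (logForcing g (s, b) (t : AddCircle T)).re) t) ∧
      ∀ t : ℝ, HasDerivAt (fun t : ℝ => b t)
        (ε * (logForcing g (s, b) (t : AddCircle T)).im) t := by
  have happ x : logForcing g (s, b) x = g x * Complex.exp (-⟨s x, b x⟩) := by
    simp [logForcing, continuousMap_exp_apply, Complex.exp_eq_exp_ℂ]
  simp only [IsIntegralCurve, hasDerivAt_iff_re_im, forall_and, logField, toComplexOp_apply]
  simp [← happ, -Complex.ofReal_exp]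

theorem blownUpMap_eq_zero_iff {g : C(AddCircle T, ℂ)} {ε : ℝ} (hε : ε ≠ 0)
    (v : C(AddCircle T, ℝ) × C(AddCircle T, ℝ)) :
    blownUpMap g (ε, v) = 0 ↔ IsIntegralCurve (fun t : ℝ => toComplexOp v t) (logField g ε) := by
  obtain ⟨s, b⟩ := v
  set h := logForcing g (s, b) with hh
  have hs t : 1 - exp (2 * s t) + ε * (h t).re = -2 * s t
      + (1 - NormedSpace.exp ((2 : ℝ) • s) + (2 : ℝ) • s + ε • reOp h) t := by
    simp only [exp_eq_exp_ℝ, ContinuousMap.add_apply, ContinuousMap.sub_apply,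
      ContinuousMap.one_apply, continuousMap_exp_apply, ContinuousMap.coe_smul, Pi.smul_apply,
      smul_eq_mul, reOp_apply]
    ring
  have hb t : ε * (h t).im = (ε • imOp h) t := rfl
  rw [isIntegralCurve_logField_iff, ← hh]
  simp only [hs, hb]
  simp only [← smul_eq_mul]
  rw [hasDerivAt_iff_eq_decayOp two_ne_zero, hasDerivAt_iff_eq_primitiveOp, map_smul, map_smul,
    smul_eq_zero_iff_right hε, ← sub_eval_sub_eq_zero_iff (by simp [primitiveOp_apply_zero]),
    ← sub_eq_zero (a := s), ← Prod.mk_eq_zero]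
  rfl

end BlownUpMap

section RotatingFrameBranch

/-- The continuous function on the circle induced by a continuous periodic function. -/
def periodicLift {T : ℝ} {X : Type*} [TopologicalSpace X] (f : ℝ → X) (hf : Continuous f)
    (hp : Function.Periodic f T) : C(AddCircle T, X) :=
  ⟨hp.lift, continuous_coinduced_dom.2 hf⟩

@[simp] theorem periodicLift_coe {T : ℝ} {X : Type*} [TopologicalSpace X] (f : ℝ → X)
    (hf : Continuous f) (hp : Function.Periodic f T) (t : ℝ) : periodicLift f hf hp t = f t := rfl

variable {T : ℝ} [hT : Fact (0 < T)]

theorem exists_blownUpMap_eq_zero {g : C(AddCircle T, ℂ)} {ε r : ℝ} (hε : ε ≠ 0) (hr : 0 < r)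
    {w : ℝ → ℂ} (hw : IsIntegralCurve w (rotField g ε)) (hp : Function.Periodic w T)
    (hslit : ∀ t, w t ∈ Complex.slitPlane) (hlog : ∀ t, ‖Complex.log (w t)‖ < r) :
    ∃ v, ‖v‖ < r ∧ blownUpMap g (ε, v) = 0 ∧ ∀ t : ℝ, w t = Complex.exp (toComplexOp v t) := by
  set z : C(AddCircle T, ℂ) := periodicLift (fun t => Complex.log (w t))
    (hw.continuous.clog hslit) fun t => by simp only [hp t]
  have hz t : z (t : ℝ) = Complex.log (w t) := rfl
  refine ⟨(reOp z, imOp z), norm_reOp_imOp_lt hr ?_, ?_, fun t => ?_⟩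
  · rw [ContinuousMap.norm_lt_iff _ hr]
    exact fun x => QuotientAddGroup.induction_on x hlog
  · rw [blownUpMap_eq_zero_iff hε, toComplexOp_reOp_imOp]
    exact isIntegralCurve_clog hw hslit
  · rw [toComplexOp_reOp_imOp, hz, Complex.exp_log (Complex.slitPlane_ne_zero (hslit t))]

theorem hasPeriodicBranch_rotField {g : C(AddCircle T, ℂ)} (him : circleMean (imOp g) = 0)
    (hre : circleMean (reOp g) ≠ 0) : HasPeriodicBranch (rotField g) T 1 := by
  obtain ⟨γ, hγ, hzeros⟩ := exists_zeros_blownUpMap him hre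
  obtain ⟨r, hr, hball⟩ := Metric.eventually_nhds_iff_ball.1 hzeros
  refine ⟨fun ε t => Complex.exp (toComplexOp (γ ε) t), ?_, ?_, ?_⟩
  · have hcont : Continuous fun v : C(AddCircle T, ℝ) × C(AddCircle T, ℝ) =>
        Complex.exp (toComplexOp v (0 : ℝ)) := by fun_prop
    simpa [Function.comp_def] using (hcont.tendsto 0).comp (hγ.mono_left nhdsWithin_le_nhds)
  · filter_upwards [nhdsWithin_le_nhds ((tendsto_id.prodMk_nhds hγ).eventually hzeros),
      self_mem_nhdsWithin] with ε hε hpos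
    refine ⟨isIntegralCurve_cexp ?_, fun t => by simp⟩
    exact (blownUpMap_eq_zero_iff (ne_of_gt hpos) _).1 (hε.2 rfl)
  · have hU : {z : ℂ | z ∈ Complex.slitPlane ∧ ‖Complex.log z‖ < r} ∈ 𝓝 1 :=
      (Complex.isOpen_slitPlane.eventually_mem Complex.one_mem_slitPlane).and
        ((continuousAt_clog Complex.one_mem_slitPlane).norm.eventually_lt continuousAt_const
          (by simpa using hr))
    have hstay := eventually_forall_periodic_mem_nhds_one g hU
    rw [nhds_prod_eq] at hstay
    have hle : 𝓝[>] (0 : ℝ) ×ˢ 𝓝 (1 : ℂ) ≤ 𝓝 0 ×ˢ 𝓝 1 := prod_mono_left _ nhdsWithin_le_nhds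
    filter_upwards [hle hstay, tendsto_fst.eventually self_mem_nhdsWithin,
      tendsto_fst.eventually (nhdsWithin_le_nhds (Metric.ball_mem_nhds (0 : ℝ) hr))]
      with ⟨ε, x⟩ hmem hpos hsmall w hw hp h0
    obtain ⟨v, hvr, hv, hwv⟩ := exists_blownUpMap_eq_zero (ne_of_gt hpos) hr hw hp
      (fun t => (hmem w hw hp h0 t).1) (fun t => (hmem w hw hp h0 t).2)
    have hγv : γ ε = v := (hball (ε, v) (by
      rw [← ball_prod_same]
      exact ⟨hsmall, mem_ball_zero_iff.2 hvr⟩)).1 hv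
    ext t
    rw [hwv, hγv]

end RotatingFrameBranch

section PlanarSystem

/-- The planar system `x' = (x₁ - x₀ (|x|² - 1), -x₀ - x₁ (|x|² - 1) + ε f t)`, with an arbitrary
forcing `f`; `sysF2` is the case `f t = sin t + sat (k₁ sin (t + η))`. -/
def forcedField (f : ℝ → ℝ) (ε t : ℝ) (x : Fin 2 → ℝ) : Fin 2 → ℝ :=
  ![x 1 - x 0 * (x 0 ^ 2 + x 1 ^ 2 - 1), -x 0 - x 1 * (x 0 ^ 2 + x 1 ^ 2 - 1) + ε * f t]

/-- The solution of the unperturbed system on its limit cycle through `(sin θ, cos θ)`, as a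
complex number. -/
noncomputable def limitCycle (θ t : ℝ) : ℂ := ⟨sin (t + θ), cos (t + θ)⟩

theorem norm_limitCycle (θ t : ℝ) : ‖limitCycle θ t‖ = 1 := by
  simp [limitCycle, Complex.norm_def, Complex.normSq_mk, ← sq]

theorem limitCycle_ne_zero (θ t : ℝ) : limitCycle θ t ≠ 0 :=
  norm_ne_zero_iff.1 (by simp [norm_limitCycle])

theorem limitCycle_periodic (θ : ℝ) : Function.Periodic (limitCycle θ) (2 * π) := fun t => by
  simp only [limitCycle, add_right_comm t, sin_add_two_pi, cos_add_two_pi]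

theorem hasDerivAt_limitCycle (θ t : ℝ) :
    HasDerivAt (limitCycle θ) (-Complex.I * limitCycle θ t) t := by
  refine hasDerivAt_iff_re_im.2 ⟨?_, ?_⟩
  · simpa [limitCycle] using ((hasDerivAt_id t).add_const θ).sin
  · simpa [limitCycle] using ((hasDerivAt_id t).add_const θ).cos

/-- The change of coordinates from the frame rotating with `limitCycle θ` to the plane. -/
noncomputable def rotatingFrame (θ t : ℝ) : ℂ ≃ₜ (Fin 2 → ℝ) :=
  (Homeomorph.mulLeft₀ _ (limitCycle_ne_zero θ t)).trans
    (Complex.equivRealProdCLM.trans (ContinuousLinearEquiv.finTwoArrow ℝ ℝ).symm).toHomeomorph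

theorem rotatingFrame_zero_one (θ : ℝ) : rotatingFrame θ 0 1 = ![sin θ, cos θ] := by
  change ![(limitCycle θ 0 * 1).re, (limitCycle θ 0 * 1).im] = _
  rw [mul_one, limitCycle, zero_add]

theorem rotatingFrame_periodic (θ : ℝ) : Function.Periodic (rotatingFrame θ) (2 * π) := fun t => by
  simp only [rotatingFrame, limitCycle_periodic θ t]

theorem limitCycle_mul_rotatingFrame_symm (θ t : ℝ) (x : Fin 2 → ℝ) :
    limitCycle θ t * (rotatingFrame θ t).symm x = ⟨x 0, x 1⟩ :=
  mul_inv_cancel_left₀ (limitCycle_ne_zero θ t) _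

theorem hasDerivAt_iff_hasDerivAt_mul {u w : ℝ → ℂ} {a w' : ℂ} {t : ℝ}
    (hu : HasDerivAt u (a * u t) t) (hne : ∀ s, u s ≠ 0) :
    HasDerivAt w w' t ↔ HasDerivAt (fun s => u s * w s) (u t * (a * w t + w')) t := by
  refine ⟨fun h => (hu.mul h).congr_deriv (by ring), fun h => ?_⟩
  have hut := hne t
  have hw : w = fun s => u s * w s / u s := funext fun s => (mul_div_cancel_left₀ _ (hne s)).symm
  rw [hw]
  refine (h.div hu hut).congr_deriv ?_
  field_simp
  ring

/-- The forcing `f` seen from the frame rotating with `limitCycle θ`. -/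
noncomputable def rotForcing {f : ℝ → ℝ} (hf : Continuous f) (hp : Function.Periodic f (2 * π))
    (θ : ℝ) : C(AddCircle (2 * π), ℂ) :=
  toComplexOp
    (periodicLift (fun t => f t * cos (t + θ)) (by fun_prop)
      (hp.mul fun t => by rw [add_right_comm, cos_add_two_pi]),
    periodicLift (fun t => f t * sin (t + θ)) (by fun_prop)
      (hp.mul fun t => by rw [add_right_comm, sin_add_two_pi]))

theorem limitCycle_mul_rotForcing {f : ℝ → ℝ} (hf : Continuous f)
    (hp : Function.Periodic f (2 * π)) (θ t : ℝ) :
    limitCycle θ t * rotForcing hf hp θ t = f t * Complex.I := by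
  refine Complex.ext ?_ ?_ <;>
    simp only [limitCycle, rotForcing, toComplexOp_apply, periodicLift_coe, Complex.mul_re,
      Complex.mul_im, Complex.ofReal_re, Complex.ofReal_im, Complex.I_re, Complex.I_im]
  · ring
  · linear_combination f t * sin_sq_add_cos_sq (t + θ)

theorem forcedField_eq_complex (f : ℝ → ℝ) (ε t : ℝ) (x : Fin 2 → ℝ) :
    (⟨forcedField f ε t x 0, forcedField f ε t x 1⟩ : ℂ) =
      -Complex.I * ⟨x 0, x 1⟩ + ⟨x 0, x 1⟩ * (1 - (‖(⟨x 0, x 1⟩ : ℂ)‖ ^ 2 : ℝ))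
        + ε * (f t * Complex.I) := by
  rw [Complex.sq_norm, Complex.normSq_mk]
  apply Complex.ext <;> simp [forcedField, -Complex.ofReal_add, -Complex.ofReal_mul] <;> ring

theorem isIntegralCurve_forcedField_iff {f : ℝ → ℝ} (hf : Continuous f)
    (hp : Function.Periodic f (2 * π)) (θ ε : ℝ) (ψ : ℝ → Fin 2 → ℝ) :
    IsIntegralCurve ψ (forcedField f ε) ↔
      IsIntegralCurve (fun t => (rotatingFrame θ t).symm (ψ t))
        (rotField (rotForcing hf hp θ) ε) := by
  refine forall_congr' fun t => ?_
  have hz s := limitCycle_mul_rotatingFrame_symm θ s (ψ s)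
  have hfield : limitCycle θ t * (-Complex.I * (rotatingFrame θ t).symm (ψ t)
        + rotField (rotForcing hf hp θ) ε t ((rotatingFrame θ t).symm (ψ t))) =
      ⟨forcedField f ε t (ψ t) 0, forcedField f ε t (ψ t) 1⟩ := by
    rw [forcedField_eq_complex, ← hz, norm_mul, norm_limitCycle, one_mul,
      ← limitCycle_mul_rotForcing hf hp θ, rotField]
    ring
  rw [hasDerivAt_iff_hasDerivAt_mul (hasDerivAt_limitCycle θ t) (limitCycle_ne_zero θ), hfield]
  simp only [hz, hasDerivAt_iff_re_im, hasDerivAt_pi, Fin.forall_fin_two]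

theorem hasPeriodicBranch_forcedField {f : ℝ → ℝ} (hf : Continuous f)
    (hp : Function.Periodic f (2 * π)) {θ : ℝ}
    (hsin : ∫ t in (0 : ℝ)..2 * π, f t * sin (t + θ) = 0)
    (hcos : ∫ t in (0 : ℝ)..2 * π, f t * cos (t + θ) ≠ 0) :
    HasPeriodicBranch (forcedField f) (2 * π) ![sin θ, cos θ] := by
  have : Fact (0 < 2 * π) := ⟨two_pi_pos⟩
  have hbranch : HasPeriodicBranch (rotField (rotForcing hf hp θ)) (2 * π) 1 :=
    hasPeriodicBranch_rotField (by simpa [circleMean_apply, rotForcing] using hsin)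
      (by simpa [circleMean_apply, rotForcing, pi_ne_zero] using hcos)
  rw [← rotatingFrame_zero_one]
  exact hbranch.congr_homeomorph (rotatingFrame θ) (rotatingFrame_periodic θ)
    (isIntegralCurve_forcedField_iff hf hp θ)

end PlanarSystem

section Melnikov

theorem sat_eq_max_min (x : ℝ) : sat x = max (-1) (min x 1) := by
  unfold sat
  grind

@[fun_prop]
theorem continuous_sat : Continuous sat := by
  rw [funext sat_eq_max_min]
  fun_prop

theorem sat_monotone : Monotone sat := fun x y h => by
  rw [sat_eq_max_min, sat_eq_max_min]
  gcongr

theorem sat_of_abs_le {x : ℝ} (h : |x| ≤ 1) : sat x = x := by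
  rw [sat, if_neg (not_lt.2 (abs_le.1 h).1), if_pos (abs_le.1 h).2]

/-- The integral `i₁` of the paper as a function of `k₁`: the first sine moment of
`t ↦ sat (k sin t)`. -/
noncomputable def satMoment (k : ℝ) : ℝ := ∫ t in (0 : ℝ)..2 * π, sin t * sat (k * sin t)

theorem satMoment_strictMono : StrictMono satMoment := by
  intro k k' hk
  obtain ⟨s, hs, hks, hks'⟩ : ∃ s ∈ Ioc (0 : ℝ) 1, |k * s| ≤ 1 ∧ |k' * s| ≤ 1 := by
    have hsmall (c : ℝ) : ∀ᶠ s in 𝓝[>] (0 : ℝ), |c * s| ≤ 1 :=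
      nhdsWithin_le_nhds ((ContinuousAt.eventually_lt (by fun_prop) (by fun_prop)
        (by simp)).mono fun _ => le_of_lt)
    have hIoc : ∀ᶠ s in 𝓝[>] (0 : ℝ), s ∈ Ioc (0 : ℝ) 1 := Ioc_mem_nhdsGT zero_lt_one
    exact (hIoc.and ((hsmall k).and (hsmall k'))).exists
  refine intervalIntegral.integral_lt_integral_of_continuousOn_of_le_of_exists_lt two_pi_pos
    (by fun_prop) (by fun_prop) (fun t _ => ?_) ⟨arcsin s, ⟨arcsin_nonneg.2 hs.1.le, ?_⟩, ?_⟩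
  · rcases le_total 0 (sin t) with h | h
    · exact mul_le_mul_of_nonneg_left (sat_monotone (mul_le_mul_of_nonneg_right hk.le h)) h
    · exact mul_le_mul_of_nonpos_left (sat_monotone (mul_le_mul_of_nonpos_right hk.le h)) h
  · linarith [arcsin_le_pi_div_two s, pi_pos]
  · rw [sin_arcsin (by linarith [hs.1]) hs.2, sat_of_abs_le hks, sat_of_abs_le hks']
    exact mul_lt_mul_of_pos_left (mul_lt_mul_of_pos_right hk hs.1) hs.1

theorem satMoment_of_abs_le {k : ℝ} (hk : |k| ≤ 1) : satMoment k = k * π := by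
  have hlin (t : ℝ) : sin t * sat (k * sin t) = k * sin t ^ 2 := by
    rw [sat_of_abs_le, mul_left_comm, sq]
    rw [abs_mul]
    exact mul_le_one₀ hk (abs_nonneg _) (abs_sin_le_one t)
  simp only [satMoment, hlin, intervalIntegral.integral_const_mul, integral_sin_sq]
  simp

theorem satMoment_eq_mul_pi_iff {k c : ℝ} (hc : |c| ≤ 1) : satMoment k = c * π ↔ k = c := by
  rw [← satMoment_of_abs_le hc, satMoment_strictMono.injective.eq_iff]

theorem satMoment_mul_sin_eq_zero_iff {k η : ℝ} :
    satMoment k * sin η = 0 ↔ k = 0 ∨ ∃ j : ℤ, η = j * π := by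
  have hmoment : satMoment k = 0 ↔ k = 0 := by
    simpa only [zero_mul] using satMoment_eq_mul_pi_iff (c := 0) (by simp)
  rw [mul_eq_zero, hmoment, sin_eq_zero_iff]
  simp only [eq_comm (a := η)]

theorem integral_comp_sin_mul_cos {h : ℝ → ℝ} (hh : Continuous h) :
    ∫ t in (0 : ℝ)..2 * π, h (sin t) * cos t = 0 := by
  have hsubst := intervalIntegral.integral_comp_mul_deriv (a := 0) (b := 2 * π)
    (fun t _ => hasDerivAt_sin t) continuous_cos.continuousOn hh
  rwa [sin_zero, sin_two_pi, intervalIntegral.integral_same] at hsubst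

theorem integral_comp_sin_add_mul_sin_add {h : ℝ → ℝ} (hh : Continuous h) (a b : ℝ) :
    ∫ t in (0 : ℝ)..2 * π, h (sin (t + a)) * sin (t + b) =
      (∫ t in (0 : ℝ)..2 * π, sin t * h (sin t)) * cos (b - a) := by
  have hp : Function.Periodic (fun t => h (sin t) * sin (t + (b - a))) (2 * π) := fun t => by
    simp only [sin_add_two_pi, add_right_comm t (2 * π)]
  have hexpand (t : ℝ) : h (sin t) * sin (t + (b - a)) =
      sin t * h (sin t) * cos (b - a) + h (sin t) * cos t * sin (b - a) := by
    rw [sin_add]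
    ring
  calc ∫ t in (0 : ℝ)..2 * π, h (sin (t + a)) * sin (t + b)
      = ∫ t in (0 : ℝ)..2 * π, h (sin (t + a)) * sin (t + a + (b - a)) := by
        simp only [add_assoc, add_sub_cancel]
    _ = ∫ t in (0 : ℝ)..2 * π, h (sin t) * sin (t + (b - a)) := by
        rw [intervalIntegral.integral_comp_add_right fun t => h (sin t) * sin (t + (b - a)),
          zero_add, add_comm, hp.intervalIntegral_add_eq a 0, zero_add]
    _ = _ := by
        simp only [hexpand]
        rw [intervalIntegral.integral_add (Continuous.intervalIntegrable (by fun_prop) _ _)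
          (Continuous.intervalIntegrable (by fun_prop) _ _), intervalIntegral.integral_mul_const,
          intervalIntegral.integral_mul_const, integral_comp_sin_mul_cos hh, zero_mul, add_zero]

/-- The forcing of `sysF2`, so that `sysF2 k η` is definitionally `forcedField (satForcing k η)`. -/
noncomputable def satForcing (k η t : ℝ) : ℝ := sin t + sat (k * sin (t + η))

theorem continuous_satForcing (k η : ℝ) : Continuous (satForcing k η) := by
  unfold satForcing
  fun_prop

theorem satForcing_periodic (k η : ℝ) : Function.Periodic (satForcing k η) (2 * π) := fun t => by
  rw [satForcing, satForcing, sin_add_two_pi, add_right_comm, sin_add_two_pi]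

theorem integral_satForcing_mul_sin (k η θ : ℝ) :
    ∫ t in (0 : ℝ)..2 * π, satForcing k η t * sin (t + θ) =
      (π + satMoment k * cos η) * cos θ + satMoment k * sin η * sin θ := by
  have hsin : ∫ t in (0 : ℝ)..2 * π, sin t * sin (t + θ) = π * cos θ := by
    simpa [← sq, integral_sin_sq] using integral_comp_sin_add_mul_sin_add continuous_id 0 θ
  have hsat := integral_comp_sin_add_mul_sin_add (h := fun x => sat (k * x)) (by fun_prop) η θ
  simp only [satForcing, add_mul]
  rw [intervalIntegral.integral_add (Continuous.intervalIntegrable (by fun_prop) _ _)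
    (Continuous.intervalIntegrable (by fun_prop) _ _), hsin, hsat, ← satMoment, cos_sub]
  ring

theorem integral_satForcing_mul_cos (k η θ : ℝ) :
    ∫ t in (0 : ℝ)..2 * π, satForcing k η t * cos (t + θ) =
      satMoment k * sin η * cos θ - (π + satMoment k * cos η) * sin θ := by
  have h := integral_satForcing_mul_sin k η (θ + π / 2)
  simp only [← add_assoc, sin_add_pi_div_two, cos_add_pi_div_two] at h
  rw [h]
  ring

theorem eq_zero_of_rotation_eq_zero {A B θ : ℝ} (h : A * cos θ + B * sin θ = 0)
    (h' : B * cos θ - A * sin θ = 0) : A = 0 ∧ B = 0 := by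
  have hsc := sin_sq_add_cos_sq θ
  constructor
  · linear_combination cos θ * h - sin θ * h' - A * hsc
  · linear_combination sin θ * h + cos θ * h' - B * hsc

theorem mul_cos_arctan_div_eq {A B : ℝ} (hB : B ≠ 0) :
    A * cos (arctan (A / B)) = B * sin (arctan (A / B)) := by
  rw [← tan_mul_cos (cos_arctan_pos (A / B)).ne', tan_arctan, ← mul_assoc, mul_div_cancel₀ _ hB]

theorem eq_one_or_eq_neg_one_of_melnikov_eq_zero {k η : ℝ} (hcos : π + satMoment k * cos η = 0)
    (hsin : satMoment k * sin η = 0) :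
    (k = 1 ∧ ∃ j : ℤ, η = π + 2 * π * j) ∨ k = -1 ∧ ∃ j : ℤ, η = 2 * π * j := by
  have hmoment : satMoment k ≠ 0 := fun h => by simp [h, pi_ne_zero] at hcos
  rcases sin_eq_zero_iff_cos_eq.1 ((mul_eq_zero.1 hsin).resolve_left hmoment) with hη | hη
  · obtain ⟨j, rfl⟩ := (cos_eq_one_iff η).1 hη
    exact .inr ⟨(satMoment_eq_mul_pi_iff (by simp)).1 (by rw [hη] at hcos; linarith), j, by ring⟩
  · obtain ⟨j, rfl⟩ := cos_eq_neg_one_iff.1 hη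
    exact .inl ⟨(satMoment_eq_mul_pi_iff (by simp)).1 (by rw [hη] at hcos; linarith), j, by ring⟩

theorem hasPeriodicBranch_sysF2 {k η θ : ℝ}
    (hcong₁ : ¬(k = 1 ∧ ∃ j : ℤ, η = π + 2 * π * j)) (hcong₂ : ¬(k = -1 ∧ ∃ j : ℤ, η = 2 * π * j))
    (hθ : (π + satMoment k * cos η) * cos θ + satMoment k * sin η * sin θ = 0) :
    HasPeriodicBranch (sysF2 k η) (2 * π) ![sin θ, cos θ] := by
  refine hasPeriodicBranch_forcedField (continuous_satForcing k η) (satForcing_periodic k η)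
    (by rwa [integral_satForcing_mul_sin]) ?_
  rw [integral_satForcing_mul_cos]
  intro hθ'
  obtain ⟨hA, hB⟩ := eq_zero_of_rotation_eq_zero hθ hθ'
  exact (eq_one_or_eq_neg_one_of_melnikov_eq_zero hA hB).elim hcong₁ hcong₂

end Melnikov

theorem stmt18
    (k₁ η : ℝ)
    -- (k₁,η) is not congruent (mod 2π in the second component) to (1,π) nor to (-1,0)
    (hcong₁ : ¬(k₁ = 1 ∧ ∃ j : ℤ, η = Real.pi + 2 * Real.pi * j))
    (hcong₂ : ¬(k₁ = -1 ∧ ∃ j : ℤ, η = 2 * Real.pi * j))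
    (i₁ : ℝ) (hi₁ : i₁ = ∫ t in (0 : ℝ)..(2 * Real.pi), Real.sin t * sat (k₁ * Real.sin t))
    (θstar : ℝ)
    (hθstar : θstar = Real.arctan ((Real.pi + i₁ * Real.cos η) / (i₁ * Real.sin η)))
    (θ₁ θ₂ : ℝ)
    (hθcase1 : (k₁ = 0 ∨ ∃ j : ℤ, η = j * Real.pi) →
      θ₁ = Real.pi / 2 ∧ θ₂ = 3 * Real.pi / 2)
    (hθcase2 : ¬(k₁ = 0 ∨ ∃ j : ℤ, η = j * Real.pi) →
      θ₁ = Real.pi - θstar ∧ θ₂ = 2 * Real.pi - θstar)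
    (q : Fin 2 → (Fin 2 → ℝ))
    (hq : q = ![![Real.sin θ₁, Real.cos θ₁], ![Real.sin θ₂, Real.cos θ₂]]) :
    ∃ ε₁ > 0, ∃ δ > 0, ∃ Φ : ℝ → Fin 2 → ℝ → (Fin 2 → ℝ),
      ∀ e ∈ Set.Ioc (0 : ℝ) ε₁, ∀ i : Fin 2,
        -- Φ e i is a 2π-periodic solution of (S'_e)
        (∀ t : ℝ, HasDerivAt (Φ e i) (sysF2 k₁ η e t (Φ e i t)) t) ∧
        (∀ t : ℝ, Φ e i (t + 2 * Real.pi) = Φ e i t) ∧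
        -- its initial condition converges to (sin θᵢ, cos θᵢ) as e → 0⁺
        Filter.Tendsto (fun e' => Φ e' i 0) (𝓝[>] (0 : ℝ)) (nhds (q i)) ∧
        -- it is the only 2π-periodic solution with initial value in B_δ(q i)
        (∀ ψ : ℝ → (Fin 2 → ℝ),
          (∀ t : ℝ, HasDerivAt ψ (sysF2 k₁ η e t (ψ t)) t) →
          (∀ t : ℝ, ψ (t + 2 * Real.pi) = ψ t) →
          ψ 0 ∈ Metric.ball (q i) δ → ψ = Φ e i) := by
  obtain rfl : i₁ = satMoment k₁ := hi₁
  have hθ : θ₂ = θ₁ + π ∧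
      (π + satMoment k₁ * cos η) * cos θ₁ + satMoment k₁ * sin η * sin θ₁ = 0 := by
    by_cases hcase : k₁ = 0 ∨ ∃ j : ℤ, η = j * π
    · obtain ⟨rfl, rfl⟩ := hθcase1 hcase
      exact ⟨by ring, by simp [satMoment_mul_sin_eq_zero_iff.2 hcase]⟩
    · obtain ⟨rfl, rfl⟩ := hθcase2 hcase
      refine ⟨by ring, ?_⟩
      have hzero := mul_cos_arctan_div_eq (A := π + satMoment k₁ * cos η)
        (satMoment_mul_sin_eq_zero_iff.not.2 hcase)
      rw [← hθstar] at hzero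
      rw [cos_pi_sub, sin_pi_sub]
      linarith
  obtain ⟨rfl, hθ₁⟩ := hθ
  have hθ₂ : (π + satMoment k₁ * cos η) * cos (θ₁ + π)
      + satMoment k₁ * sin η * sin (θ₁ + π) = 0 := by
    rw [cos_add_pi, sin_add_pi]
    linarith
  refine exists_unique_periodic_of_hasPeriodicBranch (hq ▸ Fin.forall_fin_two.2 ⟨?_, ?_⟩)
  · exact hasPeriodicBranch_sysF2 hcong₁ hcong₂ hθ₁
  · exact hasPeriodicBranch_sysF2 hcong₁ hcong₂ hθ₂
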